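/- Let R be a unital associative and commutative ring, let A be a unital associative R-algebra generated (as a unital R-algebra) by a set X, and let S ⊆ A. Let M = { x_1 ⋯ x_k | k ≥ 0, x_i ∈ X } be the set of all finite products of elements of X (including the empty product 1). Let I be the two-sided ideal of A generated by the following elements, where s ranges over S and x_1, x_2, x_3, x_4, x_5 range over X: [s, x_1, x_2]; s[x_1, x_2, x_3]; [s, x_1][x_2, x_3, x_4]; [s, x_1][x_2, x_3] + [s, x_2][x_1, x_3]; and s([x_1, x_2][x_3, x_4] + [x_1, x_3][x_2, x_4]). Then for all s ∈ S, all d_1, d_2 ∈ M, and all x ∈ X, the element [s, x][d_1, d_2] + [s, d_2][d_1, x] belongs to I. -/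

import Mathlib

/-!
Everything happens in the quotient `B = A / I`, where `z x = [s, x]` for `x ∈ X` commutes with `X`.

Fix a generator `w`. The relations say that `z w` kills every `[x₁, x₂, x₃]`, and commuting the
relation `s * q = 0`, `q = [x₁, x₂][x₃, x₄] + [x₁, x₃][x₂, x₄]`, with `w` shows that `z w` kills `q`
as well (`ann_quad`). Hence, after multiplication by `z w`, the commutators `[d, x]` of a monomial
`d` with a generator `x` behave as central elements (`ann_cm_cm`): expanding `[x₁ d, x, y]` by the
Leibniz rule leaves only the expression `[x₁, y][d, x] + [x₁, x][d, y]`, which `z w` kills by a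
further induction on `d` (`ann_quad_monomial`).

The claim is then an induction on `d₂` with the Leibniz rule. Splitting off a generator `y` from
`d₂ = y e` leaves `z x [d₁, y] e + z y e [d₁, x]`; the factor `e` may be moved to the right of
`[d₁, x]`, and `z x [d₁, y] + z y [d₁, x] = 0` (`swap_monomial`) follows from the relation
`z x [y, w] + z y [x, w] = 0` by induction on `d₁`.
-/

/-- The commutator `[a, b] = a * b - b * a`. -/
def cm {A : Type*} [Ring A] (a b : A) : A := a * b - b * a

section Core

variable {B : Type*} [Ring B] {X : Set B}

/-- The quadratic relators annihilated by `s` are also annihilated by `[s, w]`: by `h1`, `s` commutes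
with `[x, y]`, so `s` kills the commutator of a quadratic relator with `w`. -/
theorem ann_quad {s : B}
    (h1 : ∀ x ∈ X, ∀ y ∈ X, cm (cm s x) y = 0)
    (h2 : ∀ x ∈ X, ∀ y ∈ X, ∀ t ∈ X, s * cm (cm x y) t = 0)
    (h5 : ∀ x ∈ X, ∀ y ∈ X, ∀ t ∈ X, ∀ u ∈ X, s * (cm x y * cm t u + cm x t * cm y u) = 0)
    {w : B} (hw : w ∈ X) {x y t u : B} (hx : x ∈ X) (hy : y ∈ X) (ht : t ∈ X) (hu : u ∈ X) :
    cm s w * (cm x y * cm t u + cm x t * cm y u) = 0 := by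
  have hs : ∀ a ∈ X, ∀ b ∈ X, cm s (cm a b) = 0 := fun a ha b hb => by
    have e : cm s (cm a b) = cm (cm s a) b - cm (cm s b) a := by unfold cm; noncomm_ring
    rw [e, h1 a ha b hb, h1 b hb a ha, sub_zero]
  have e : cm s w * (cm x y * cm t u + cm x t * cm y u) =
      s * (cm x y * cm t u + cm x t * cm y u) * w - w * (s * (cm x y * cm t u + cm x t * cm y u))
      - (s * cm (cm x y) w) * cm t u - (s * cm (cm x t) w) * cm y u
      - cm s (cm x y) * cm (cm t u) w - cm s (cm x t) * cm (cm y u) w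
      - cm x y * (s * cm (cm t u) w) - cm x t * (s * cm (cm y u) w) := by
    unfold cm; noncomm_ring
  rw [e, h5 x hx y hy t ht u hu, h2 x hx y hy w hw, h2 x hx t ht w hw, hs x hx y hy, hs x hx t ht,
    h2 t ht u hu w hw, h2 y hy u hu w hw]
  simp

section Annihilator

variable {z : B}

theorem ann_quad_monomial (hz : ∀ x ∈ X, cm z x = 0)
    (h3 : ∀ x ∈ X, ∀ y ∈ X, ∀ t ∈ X, z * cm (cm x y) t = 0)
    (hq : ∀ x ∈ X, ∀ y ∈ X, ∀ t ∈ X, ∀ u ∈ X, z * (cm x y * cm t u + cm x t * cm y u) = 0)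
    {a x y d : B} (ha : a ∈ X) (hx : x ∈ X) (hy : y ∈ X) (hd : d ∈ Submonoid.closure X) :
    z * (cm a y * cm d x + cm a x * cm d y) = 0 := by
  induction hd using Submonoid.closure_induction_left with
  | one => simp [cm]
  | mul_left b hb d _ ih =>
    have e : z * (cm a y * cm (b * d) x + cm a x * cm (b * d) y) =
        b * (z * (cm a y * cm d x + cm a x * cm d y))
        - (z * (cm a y * cm x b + cm a x * cm y b)) * d
        + (z * cm (cm a y) b) * cm d x + (z * cm (cm a x) b) * cm d y
        + cm z b * (cm a y * cm d x + cm a x * cm d y) := by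
      unfold cm; noncomm_ring
    rw [e, ih, hq a ha y hy x hx b hb, h3 a ha y hy b hb, h3 a ha x hx b hb, hz b hb]
    simp

theorem ann_cm_cm_generator (hz : ∀ x ∈ X, cm z x = 0)
    (h3 : ∀ x ∈ X, ∀ y ∈ X, ∀ t ∈ X, z * cm (cm x y) t = 0)
    (hq : ∀ x ∈ X, ∀ y ∈ X, ∀ t ∈ X, ∀ u ∈ X, z * (cm x y * cm t u + cm x t * cm y u) = 0)
    {x y d : B} (hx : x ∈ X) (hy : y ∈ X) (hd : d ∈ Submonoid.closure X) :
    z * cm (cm d x) y = 0 := by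
  induction hd using Submonoid.closure_induction_left with
  | one => simp [cm]
  | mul_left a ha d hd ih =>
    have e : z * cm (cm (a * d) x) y =
        a * (z * cm (cm d x) y) + cm z a * cm (cm d x) y
        + z * (cm a y * cm d x + cm a x * cm d y) + (z * cm (cm a x) y) * d := by
      unfold cm; noncomm_ring
    rw [e, ih, hz a ha, ann_quad_monomial hz h3 hq ha hx hy hd, h3 a ha x hx y hy]
    simp

/-- Up to the annihilator of `z`, the commutator of a monomial with a generator commutes with
monomials. -/
theorem ann_cm_cm (hz : ∀ x ∈ X, cm z x = 0)
    (h3 : ∀ x ∈ X, ∀ y ∈ X, ∀ t ∈ X, z * cm (cm x y) t = 0)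
    (hq : ∀ x ∈ X, ∀ y ∈ X, ∀ t ∈ X, ∀ u ∈ X, z * (cm x y * cm t u + cm x t * cm y u) = 0)
    {x d e : B} (hx : x ∈ X) (hd : d ∈ Submonoid.closure X) (he : e ∈ Submonoid.closure X) :
    z * cm (cm d x) e = 0 := by
  induction he using Submonoid.closure_induction_left with
  | one => simp [cm]
  | mul_left y hy e _ ih =>
    have h : z * cm (cm d x) (y * e) =
        (z * cm (cm d x) y) * e + y * (z * cm (cm d x) e) + cm z y * cm (cm d x) e := by
      unfold cm; noncomm_ring
    rw [h, ih, hz y hy, ann_cm_cm_generator hz h3 hq hx hy hd]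
    simp

end Annihilator

theorem swap_monomial {s : B}
    (h1 : ∀ x ∈ X, ∀ y ∈ X, cm (cm s x) y = 0)
    (h4 : ∀ x ∈ X, ∀ y ∈ X, ∀ t ∈ X, cm s x * cm y t + cm s y * cm x t = 0)
    {x y d : B} (hx : x ∈ X) (hy : y ∈ X) (hd : d ∈ Submonoid.closure X) :
    cm s x * cm d y + cm s y * cm d x = 0 := by
  induction hd using Submonoid.closure_induction_left with
  | one => simp [cm]
  | mul_left w hw d _ ih =>
    have e : cm s x * cm (w * d) y + cm s y * cm (w * d) x =
        w * (cm s x * cm d y + cm s y * cm d x) - (cm s x * cm y w + cm s y * cm x w) * d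
        + cm (cm s x) w * cm d y + cm (cm s y) w * cm d x := by
      unfold cm; noncomm_ring
    rw [e, ih, h4 x hx y hy w hw, h1 x hx w hw, h1 y hy w hw]
    simp

/-- The theorem in the quotient ring, where all relators vanish. -/
theorem core {s : B}
    (h1 : ∀ x ∈ X, ∀ y ∈ X, cm (cm s x) y = 0)
    (h2 : ∀ x ∈ X, ∀ y ∈ X, ∀ t ∈ X, s * cm (cm x y) t = 0)
    (h3 : ∀ w ∈ X, ∀ x ∈ X, ∀ y ∈ X, ∀ t ∈ X, cm s w * cm (cm x y) t = 0)
    (h4 : ∀ x ∈ X, ∀ y ∈ X, ∀ t ∈ X, cm s x * cm y t + cm s y * cm x t = 0)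
    (h5 : ∀ x ∈ X, ∀ y ∈ X, ∀ t ∈ X, ∀ u ∈ X, s * (cm x y * cm t u + cm x t * cm y u) = 0)
    {x d e : B} (hx : x ∈ X) (hd : d ∈ Submonoid.closure X) (he : e ∈ Submonoid.closure X) :
    cm s x * cm d e + cm s e * cm d x = 0 := by
  induction he using Submonoid.closure_induction_left with
  | one => simp [cm]
  | mul_left y hy e he ih =>
    have h : cm s x * cm d (y * e) + cm s (y * e) * cm d x =
        y * (cm s x * cm d e + cm s e * cm d x)
        + (cm s x * cm d y + cm s y * cm d x) * e
        - cm s y * cm (cm d x) e + cm (cm s x) y * cm d e := by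
      unfold cm; noncomm_ring
    rw [h, ih, swap_monomial h1 h4 hx hy hd, h1 x hx y hy,
      ann_cm_cm (h1 y hy) (h3 y hy)
        (fun _ ha _ hb _ hc _ hf => ann_quad h1 h2 h5 hy ha hb hc hf) hx hd he]
    simp

end Core

theorem map_cm {A B : Type*} [Ring A] [Ring B] (f : A →+* B) (a b : A) :
    f (cm a b) = cm (f a) (f b) := by
  simp [cm]

theorem stmt_18 {R A : Type*} [CommRing R] [Ring A] [Algebra R A]
    (X : Set A) (hX : Algebra.adjoin R X = ⊤) (S : Set A)
    (I : TwoSidedIdeal A)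
    (hI : I = TwoSidedIdeal.span (
      {a | ∃ s ∈ S, ∃ x₁ ∈ X, ∃ x₂ ∈ X, a = cm (cm s x₁) x₂} ∪
      {a | ∃ s ∈ S, ∃ x₁ ∈ X, ∃ x₂ ∈ X, ∃ x₃ ∈ X, a = s * cm (cm x₁ x₂) x₃} ∪
      {a | ∃ s ∈ S, ∃ x₁ ∈ X, ∃ x₂ ∈ X, ∃ x₃ ∈ X, ∃ x₄ ∈ X,
        a = cm s x₁ * cm (cm x₂ x₃) x₄} ∪
      {a | ∃ s ∈ S, ∃ x₁ ∈ X, ∃ x₂ ∈ X, ∃ x₃ ∈ X,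
        a = cm s x₁ * cm x₂ x₃ + cm s x₂ * cm x₁ x₃} ∪
      {a | ∃ s ∈ S, ∃ x₁ ∈ X, ∃ x₂ ∈ X, ∃ x₃ ∈ X, ∃ x₄ ∈ X,
        a = s * (cm x₁ x₂ * cm x₃ x₄ + cm x₁ x₃ * cm x₂ x₄)})) :
    ∀ s ∈ S, ∀ d₁ ∈ Submonoid.closure X, ∀ d₂ ∈ Submonoid.closure X, ∀ x ∈ X,
      cm s x * cm d₁ d₂ + cm s d₂ * cm d₁ x ∈ I := by
  intro s hs d₁ hd₁ d₂ hd₂ x hx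
  let f : A →+* I.ringCon.Quotient := I.ringCon.mk'
  have hf : ∀ a, a ∈ I ↔ f a = 0 := fun a => by
    rw [TwoSidedIdeal.mem_iff, ← RingCon.eq]; rfl
  have hM : ∀ d ∈ Submonoid.closure X, f d ∈ Submonoid.closure (f '' X) := fun d hd => by
    have := Submonoid.mem_map_of_mem (f : A →* I.ringCon.Quotient) hd
    rwa [MonoidHom.map_mclosure] at this
  rw [hf]
  simp only [map_add, map_mul, map_cm]
  refine core (X := f '' X) ?_ ?_ ?_ ?_ ?_ ⟨x, hx, rfl⟩ (hM _ hd₁) (hM _ hd₂)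
  · rintro _ ⟨a, ha, rfl⟩ _ ⟨b, hb, rfl⟩
    simp only [← map_add, ← map_mul, ← map_cm]
    rw [← hf, hI]
    exact TwoSidedIdeal.subset_span (.inl (.inl (.inl (.inl ⟨s, hs, a, ha, b, hb, rfl⟩))))
  · rintro _ ⟨a, ha, rfl⟩ _ ⟨b, hb, rfl⟩ _ ⟨c, hc, rfl⟩
    simp only [← map_add, ← map_mul, ← map_cm]
    rw [← hf, hI]
    exact TwoSidedIdeal.subset_span (.inl (.inl (.inl (.inr ⟨s, hs, a, ha, b, hb, c, hc, rfl⟩))))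
  · rintro _ ⟨a, ha, rfl⟩ _ ⟨b, hb, rfl⟩ _ ⟨c, hc, rfl⟩ _ ⟨d, hd, rfl⟩
    simp only [← map_add, ← map_mul, ← map_cm]
    rw [← hf, hI]
    exact TwoSidedIdeal.subset_span
      (.inl (.inl (.inr ⟨s, hs, a, ha, b, hb, c, hc, d, hd, rfl⟩)))
  · rintro _ ⟨a, ha, rfl⟩ _ ⟨b, hb, rfl⟩ _ ⟨c, hc, rfl⟩
    simp only [← map_add, ← map_mul, ← map_cm]
    rw [← hf, hI]
    exact TwoSidedIdeal.subset_span (.inl (.inr ⟨s, hs, a, ha, b, hb, c, hc, rfl⟩))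
  · rintro _ ⟨a, ha, rfl⟩ _ ⟨b, hb, rfl⟩ _ ⟨c, hc, rfl⟩ _ ⟨d, hd, rfl⟩
    simp only [← map_add, ← map_mul, ← map_cm]
    rw [← hf, hI]
    exact TwoSidedIdeal.subset_span (.inr ⟨s, hs, a, ha, b, hb, c, hc, d, hd, rfl⟩)
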